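/- Let B be a block on n vertices and G obtained by attaching k whiskers, 4 ≤ k, such that G is accessible and no cut vertex w of G satisfies that N_B(w) avoids all cut sets of G \ {w} (i.e., for every cut vertex w there is a cut set of G \ {w} containing N_B(w)). Then every vertex of B has degree at least 3 in B, every cut vertex v satisfies |N_B(v)| ≤ ⌊(n+k)/2⌋ − 2, and at most one non-cut vertex of B has degree n − 1 in B; consequently 3n/2 ≤ |E(B)| ≤ (1/2)( k(⌊(n+k)/2⌋ − 2) + (n−1) + (n−2)(n−k−1) ). -/

import Mathlib

open SimpleGraph Finset

variable {V : Type*}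

/-- Number of connected components of the induced subgraph on the complement of `S`. -/
noncomputable def ncomp (G : SimpleGraph V) (S : Finset V) : ℕ :=
  Nat.card ((G.induce {v | v ∉ S}).ConnectedComponent)

/-- `S` is a cut set of `G`. -/
def cutSet [DecidableEq V] (G : SimpleGraph V) (S : Finset V) : Prop :=
  S = ∅ ∨ ∀ i ∈ S, ncomp G (S.erase i) < ncomp G S

/-- `G` is combinatorially unmixed. -/
def unmixed [DecidableEq V] (G : SimpleGraph V) : Prop :=
  G.Connected ∧ ∀ S : Finset V, cutSet G S → ncomp G S = S.card + 1

/-- `G` is accessible. -/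
def accessible [DecidableEq V] (G : SimpleGraph V) : Prop :=
  unmixed G ∧ ∀ S : Finset V, cutSet G S → S ≠ ∅ → ∃ s ∈ S, cutSet G (S.erase s)

/-- A block: connected with no cut vertices. -/
def isBlock [DecidableEq V] (G : SimpleGraph V) : Prop :=
  G.Connected ∧ ∀ v : V, ¬ cutSet G {v}

/-- The graph obtained from `B` by attaching a whisker (pendant leaf) at each `f i`. -/
def whisker {k : ℕ} (B : SimpleGraph V) (f : Fin k → V) : SimpleGraph (V ⊕ Fin k) :=
  SimpleGraph.fromRel (fun x y => match x, y with
    | Sum.inl a, Sum.inl b => B.Adj a b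
    | Sum.inl a, Sum.inr i => a = f i
    | _, _ => False)

/-- A free vertex: a vertex contained in a unique maximal clique. -/
def freeVertex (G : SimpleGraph V) (v : V) : Prop :=
  ∃! s : Set V, v ∈ s ∧ G.IsClique s ∧ ∀ t, G.IsClique t → s ⊆ t → s = t

/-! A vertex `i` of a cut set `S` has two neighbours in different components of `G \ S`. A minimal
set separating two vertices is therefore a cut set, and in an accessible graph every nonempty cut
set contains a one-element cut set. So if `v` has a non-neighbour in `B`, a minimal separator inside
`N_B(v)` shows that `v` is adjacent to a cut vertex.

Let `S` be a cut set of `G \ {w}` containing `N_B(w)`, where `w` is a cut vertex. In `G` the vertex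
`w` and its leaf form a component of `G \ S`, and every `s ∈ S` touches two further components.
Hence returning a neighbour of `w` merges at least three components, and by unmixedness `S \ {s}` is
not a cut set for `s ∈ N_B(w)`.

* If `s ∈ N_B(w)` had degree at most `2` in `B`, then `S \ {s}` would be a cut set.
* By accessibility some `S \ {s}` is a cut set, so `N_B(w)` is a proper subset of `S`, and counting
  the `|S| + 1` components of `G \ S`, one of which has two vertices, bounds `|S|`.
* If two non-cut vertices were universal in `B`, then, as one of them is adjacent to `w`, some cut
  set would contain exactly one non-cut vertex. The universal vertex outside of it would connect all
  neighbours of that vertex.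

The bounds on the number of edges follow by summing degrees. -/

theorem card_add_card_le_of_surjective_of_constant {α β : Type*} [Finite α] {φ : α → β}
    (hφ : Function.Surjective φ) {D : Finset α} {b : β} (hD : ∀ a ∈ D, φ a = b) :
    Nat.card β + #D ≤ Nat.card α + 1 := by
  classical
  have := Fintype.ofFinite α
  have := Fintype.ofSurjective φ hφ
  have hcover : (univ : Finset β).erase b ⊆ Dᶜ.image φ := by
    intro c hc
    obtain ⟨a, rfl⟩ := hφ c
    exact mem_image_of_mem φ (mem_compl.2 fun ha => ne_of_mem_erase hc (hD a ha))
  have hle := (card_le_card hcover).trans card_image_le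
  rw [card_erase_of_mem (mem_univ b), card_univ] at hle
  have hcompl := D.card_compl_add_card
  rw [Nat.card_eq_fintype_card, Nat.card_eq_fintype_card]
  omega

theorem sum_le_add_mul_of_unique_max {ι : Type*} {A : Finset ι} {g : ι → ℕ} {m : ℕ}
    (hle : ∀ a ∈ A, g a ≤ m) (huniq : ∀ a ∈ A, ∀ b ∈ A, g a = m → g b = m → a = b) :
    ∑ a ∈ A, g a ≤ m + (m - 1) * (#A - 1) := by
  classical
  rcases A.eq_empty_or_nonempty with rfl | hA
  · simp
  obtain ⟨a, haA, hmax⟩ := A.exists_max_image g hA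
  have hrest : ∀ b ∈ A.erase a, g b ≤ m - 1 := by
    intro b hb
    obtain ⟨hba, hbA⟩ := mem_erase.1 hb
    have hbm : g b ≠ m := fun h =>
      hba (huniq b hbA a haA h ((hle a haA).antisymm (h ▸ hmax b hbA)))
    have := hle b hbA
    omega
  calc ∑ b ∈ A, g b = g a + ∑ b ∈ A.erase a, g b := (add_sum_erase A g haA).symm
    _ ≤ m + #(A.erase a) • (m - 1) := add_le_add (hle a haA) (sum_le_card_nsmul _ _ _ hrest)
    _ = m + (m - 1) * (#A - 1) := by rw [card_erase_of_mem haA, smul_eq_mul, mul_comm]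

section Separation

variable {G : SimpleGraph V} {S : Finset V} {P : Set V} {i x y z : V}

/-- The vertices of `P` outside `S` form a union of components of `G \ S`. Which vertices of `S`
belong to `P` is irrelevant; this spares passing to the subtype `{v | v ∉ S}`. -/
def IsClosedOutside (G : SimpleGraph V) (S : Finset V) (P : Set V) : Prop :=
  ∀ ⦃u v⦄, u ∉ S → v ∉ S → G.Adj u v → u ∈ P → v ∈ P

/-- `x` and `y` lie in different components of `G \ S`, as witnessed by a union of components
containing `x` but not `y`. Meant for `x` and `y` outside `S`. -/
def Separates (G : SimpleGraph V) (S : Finset V) (x y : V) : Prop :=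
  ∃ P, IsClosedOutside G S P ∧ x ∈ P ∧ y ∉ P

theorem IsClosedOutside.compl (hP : IsClosedOutside G S P) : IsClosedOutside G S Pᶜ :=
  fun _ _ hu hv huv huP hvP => huP (hP hv hu huv.symm hvP)

theorem Separates.symm (h : Separates G S x y) : Separates G S y x :=
  let ⟨P, hP, hx, hy⟩ := h
  ⟨Pᶜ, hP.compl, hy, not_not.2 hx⟩

theorem Separates.ne (h : Separates G S x y) : x ≠ y := by
  rintro rfl
  obtain ⟨P, -, hx, hy⟩ := h
  exact hy hx

theorem Separates.of_adj (h : Separates G S x y) (hx : x ∉ S) (hz : z ∉ S) (hxz : G.Adj x z) :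
    Separates G S z y :=
  let ⟨P, hP, hxP, hyP⟩ := h
  ⟨P, hP, hP hx hz hxz hxP, hyP⟩

theorem separates_iff_not_reachable (hx : x ∉ S) (hy : y ∉ S) :
    Separates G S x y ↔ ¬ (G.induce {v | v ∉ S}).Reachable ⟨x, hx⟩ ⟨y, hy⟩ := by
  constructor
  · rintro ⟨P, hP, hxP, hyP⟩ ⟨p⟩
    obtain ⟨d, -, hfst, hsnd⟩ := p.exists_boundary_dart (Subtype.val ⁻¹' P) hxP hyP
    exact hsnd (hP d.fst.2 d.snd.2 d.adj hfst)
  · intro h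
    refine ⟨{u | ∃ hu : u ∉ S, (G.induce {v | v ∉ S}).Reachable ⟨x, hx⟩ ⟨u, hu⟩}, ?_,
      ⟨hx, .rfl⟩, fun ⟨_, hxy⟩ => h hxy⟩
    rintro u v - hv huv ⟨_, hxu⟩
    exact ⟨hv, hxu.trans (Adj.reachable (G := G.induce {v | v ∉ S}) huv)⟩

theorem not_separates_empty (hG : G.Preconnected) : ¬ Separates G ∅ x y := by
  rintro ⟨P, hP, hxP, hyP⟩
  obtain ⟨p⟩ := hG x y
  obtain ⟨d, -, hfst, hsnd⟩ := p.exists_boundary_dart P hxP hyP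
  exact hsnd (hP (notMem_empty _) (notMem_empty _) d.adj hfst)

section Erase

variable [DecidableEq V]

theorem IsClosedOutside.separates_erase (hP : IsClosedOutside G S P) (hx : x ∈ P) (hxi : x ≠ i)
    (hy : y ∉ P) (hi : ∀ v ∈ P, v ∉ S → ¬ G.Adj i v) : Separates G (S.erase i) x y := by
  refine ⟨P \ {i}, ?_, ⟨hx, hxi⟩, fun h => hy h.1⟩
  rintro u v hu hv huv ⟨huP, hui : u ≠ i⟩
  have huS : u ∉ S := fun h => hu (mem_erase.2 ⟨hui, h⟩)
  have hvi : v ≠ i := by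
    rintro rfl
    exact hi u huP huS huv.symm
  exact ⟨hP huS (fun h => hv (mem_erase.2 ⟨hvi, h⟩)) huv huP, hvi⟩

theorem Separates.exists_adj_adj (h : Separates G S x y) (hxi : x ≠ i) (hyi : y ≠ i)
    (h' : ¬ Separates G (S.erase i) x y) :
    ∃ p q, p ∉ S ∧ q ∉ S ∧ G.Adj i p ∧ G.Adj i q ∧ Separates G S p q := by
  obtain ⟨P, hP, hx, hy⟩ := h
  obtain ⟨p, hpP, hpS, hip⟩ : ∃ p ∈ P, p ∉ S ∧ G.Adj i p := by
    by_contra! hcon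
    exact h' (hP.separates_erase hx hxi hy hcon)
  obtain ⟨q, hqP, hqS, hiq⟩ : ∃ q ∈ Pᶜ, q ∉ S ∧ G.Adj i q := by
    by_contra! hcon
    exact h' (hP.compl.separates_erase hy hyi (not_not.2 hx) hcon).symm
  exact ⟨p, q, hpS, hqS, hip, hiq, P, hP, hpP, hqP⟩

end Erase

end Separation

section ComponentCount

variable {G : SimpleGraph V} {S T : Finset V} {i x y : V}

/-- The map from the components of `G \ S` to those of `G \ T` induced by inclusion, for
`T ⊆ S`. -/
def componentMap (G : SimpleGraph V) (h : T ⊆ S) :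
    (G.induce {v | v ∉ S}).ConnectedComponent → (G.induce {v | v ∉ T}).ConnectedComponent :=
  ConnectedComponent.map (G.induceHomOfLE
    (show ({v | v ∉ S} : Set V) ≤ {v | v ∉ T} from fun _ hv hvT => hv (h hvT))).toHom

theorem ncomp_add_card_lt_of_adj [Fintype V] (hx : x ∉ S) (hy : y ∉ S) (hxy : G.Adj x y) :
    ncomp G S + #S < Fintype.card V := by
  classical
  have hne : (⟨x, hx⟩ : {v | v ∉ S}) ≠ ⟨y, hy⟩ := fun h => hxy.ne (congrArg Subtype.val h)
  have hadj : (G.induce {v | v ∉ S}).Adj ⟨x, hx⟩ ⟨y, hy⟩ := hxy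
  have hcard := card_add_card_le_of_surjective_of_constant
    (φ := connectedComponentMk (G.induce {v | v ∉ S})) Quot.mk_surjective
    (D := {⟨x, hx⟩, ⟨y, hy⟩}) (b := connectedComponentMk _ ⟨y, hy⟩) (by
      simpa using hadj.reachable)
  have hcompl : Nat.card {v | v ∉ S} + #S = Fintype.card V := by
    rw [Set.coe_ofPred, Nat.subtype_card Sᶜ fun v => mem_compl, card_compl_add_card]
  rw [card_pair hne] at hcard
  unfold ncomp
  omega

section Erase

variable [DecidableEq V]

theorem componentMap_erase_mk_of_adj (hx : x ∉ S) (hix : G.Adj i x) :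
    componentMap G (erase_subset i S) (connectedComponentMk _ ⟨x, hx⟩) =
      connectedComponentMk _ ⟨i, notMem_erase i S⟩ :=
  ConnectedComponent.sound
    (Adj.reachable (G := G.induce {v | v ∉ S.erase i}) hix.symm)

theorem componentMap_erase_surjective (hx : x ∉ S) (hix : G.Adj i x) :
    Function.Surjective (componentMap G (erase_subset i S)) := by
  intro c
  induction c using ConnectedComponent.ind with
  | h v =>
    obtain ⟨v, hv⟩ := v
    rcases eq_or_ne v i with rfl | hvi
    · exact ⟨_, componentMap_erase_mk_of_adj hx hix⟩
    · exact ⟨connectedComponentMk _ ⟨v, fun h => hv (mem_erase.2 ⟨hvi, h⟩)⟩, rfl⟩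

theorem ncomp_erase_add_card_le [Finite V] {A : Finset V} (hne : A.Nonempty)
    (hAS : ∀ x ∈ A, x ∉ S) (hadj : ∀ x ∈ A, G.Adj i x)
    (hsep : (A : Set V).Pairwise (Separates G S)) :
    ncomp G (S.erase i) + #A ≤ ncomp G S + 1 := by
  classical
  let mk (x : A) := connectedComponentMk (G.induce {v | v ∉ S}) ⟨x, hAS x x.2⟩
  have hinj : Function.Injective mk := fun x y hxy => by
    by_contra hne
    exact (separates_iff_not_reachable (hAS x x.2) (hAS y y.2)).1
      (hsep x.2 y.2 (Subtype.coe_ne_coe.2 hne)) (ConnectedComponent.exact hxy)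
  obtain ⟨x, hx⟩ := hne
  have hcard := card_add_card_le_of_surjective_of_constant
    (componentMap_erase_surjective (hAS x hx) (hadj x hx)) (D := univ.image mk) (by
      simp only [mem_image, mem_univ, true_and, forall_exists_index, forall_apply_eq_imp_iff]
      exact fun y => componentMap_erase_mk_of_adj (hAS y y.2) (hadj y y.2))
  rwa [card_image_of_injective _ hinj, card_univ, Fintype.card_coe] at hcard

theorem exists_separates_of_ncomp_erase_lt [Finite V] (hi : i ∈ S)
    (h : ncomp G (S.erase i) < ncomp G S) :
    ∃ x y, x ∉ S ∧ y ∉ S ∧ G.Adj i x ∧ G.Adj i y ∧ Separates G S x y := by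
  have hninj : ¬ Function.Injective (componentMap G (erase_subset i S)) := fun hinj =>
    h.not_ge (Nat.card_le_card_of_injective _ hinj)
  obtain ⟨c, d, hcd, hne⟩ := Function.not_injective_iff.1 hninj
  induction c using ConnectedComponent.ind with | h u
  induction d using ConnectedComponent.ind with | h v
  have hsep : Separates G S u v :=
    (separates_iff_not_reachable u.2 v.2).2 fun huv => hne (ConnectedComponent.sound huv)
  refine hsep.exists_adj_adj (ne_of_mem_of_not_mem hi u.2).symm
    (ne_of_mem_of_not_mem hi v.2).symm fun hsep' => ?_
  exact (separates_iff_not_reachable _ _).1 hsep' (ConnectedComponent.exact hcd)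

theorem cutSet_iff_forall_exists_separates [Finite V] :
    cutSet G S ↔
      ∀ i ∈ S, ∃ x y, x ∉ S ∧ y ∉ S ∧ G.Adj i x ∧ G.Adj i y ∧ Separates G S x y := by
  constructor
  · rintro (rfl | h) i hi
    · exact absurd hi (notMem_empty i)
    · exact exists_separates_of_ncomp_erase_lt hi (h i hi)
  · refine fun h => Or.inr fun i hi => ?_
    obtain ⟨x, y, hx, hy, hix, hiy, hxy⟩ := h i hi
    have hcard := ncomp_erase_add_card_le (G := G) (S := S) (i := i) (insert_nonempty x {y})
      (by simp [hx, hy]) (by simp [hix, hiy]) (by simp [Set.pairwise_insert, hxy, hxy.symm])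
    rw [card_pair hxy.ne] at hcard
    omega

end Erase

end ComponentCount

section CutSets

/-- `S` avoids `w`, and every vertex of `S` is adjacent to two components of `G \ S` other than the
component of `w`. So `S` is a cut set of `G` and of `G` without the component of `w`. -/
structure IsCutSetAwayFrom (G : SimpleGraph V) (w : V) (S : Finset V) : Prop where
  notMem : w ∉ S
  exists_separates : ∀ s ∈ S, ∃ x y, x ∉ S ∧ y ∉ S ∧ G.Adj s x ∧ G.Adj s y ∧
    Separates G S x y ∧ Separates G S x w ∧ Separates G S y w

variable [DecidableEq V] {G : SimpleGraph V} {S N : Finset V} {w x y : V}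

theorem Separates.exists_cutSet_subset [Finite V] (h : Separates G N x y) (hx : x ∉ N)
    (hy : y ∉ N) : ∃ S ⊆ N, cutSet G S ∧ Separates G S x y := by
  obtain ⟨S, hSN, hmin⟩ := exists_minimal_le_of_wellFoundedLT (Separates G · x y) N h
  refine ⟨S, hSN, cutSet_iff_forall_exists_separates.2 fun i hi => ?_, hmin.prop⟩
  exact hmin.prop.exists_adj_adj (ne_of_mem_of_not_mem (hSN hi) hx).symm
    (ne_of_mem_of_not_mem (hSN hi) hy).symm (hmin.not_prop_of_lt (erase_ssubset hi))

theorem accessible.exists_cutSet_inter_eq_singleton (hG : accessible G) (hS : cutSet G S)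
    {A : Set V} (hA : ((S : Set V) ∩ A).Nonempty) :
    ∃ T ⊆ S, cutSet G T ∧ ∃ c, (T : Set V) ∩ A = {c} := by
  obtain ⟨T, hTS, hmin⟩ := exists_minimal_le_of_wellFoundedLT
    (fun T : Finset V => cutSet G T ∧ ((T : Set V) ∩ A).Nonempty) S ⟨hS, hA⟩
  obtain ⟨hT, hTA⟩ := hmin.prop
  refine ⟨T, hTS, hT, ?_⟩
  obtain ⟨s, hs, hTs⟩ := hG.2 T hT (coe_nonempty.1 (hTA.mono Set.inter_subset_left)).ne_empty
  refine ⟨s, hTA.subset_singleton_iff.1 fun c ⟨hcT, hcA⟩ => ?_⟩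
  by_contra hcs
  exact hmin.not_prop_of_lt (erase_ssubset hs) ⟨hTs, c, mem_erase.2 ⟨hcs, hcT⟩, hcA⟩

theorem accessible.exists_cutSet_singleton (hG : accessible G) (hS : cutSet G S)
    (hne : S.Nonempty) : ∃ s ∈ S, cutSet G {s} := by
  obtain ⟨T, hTS, hT, s, hs⟩ := hG.exists_cutSet_inter_eq_singleton hS (A := Set.univ) (by simpa)
  rw [Set.inter_univ, coe_eq_singleton] at hs
  subst hs
  exact ⟨s, singleton_subset_iff.1 hTS, hT⟩

namespace IsCutSetAwayFrom

variable {s d : V}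

theorem to_cutSet [Finite V] (hS : IsCutSetAwayFrom G w S) : cutSet G S :=
  cutSet_iff_forall_exists_separates.2 fun s hs =>
    let ⟨x, y, hx, hy, hsx, hsy, hxy, _⟩ := hS.exists_separates s hs
    ⟨x, y, hx, hy, hsx, hsy, hxy⟩

theorem not_cutSet_erase [Finite V] (hS : IsCutSetAwayFrom G w S) (hG : unmixed G) (hs : s ∈ S)
    (hsw : G.Adj s w) : ¬ cutSet G (S.erase s) := by
  intro herase
  obtain ⟨x, y, hx, hy, hsx, hsy, hxy, hxw, hyw⟩ := hS.exists_separates s hs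
  have hcard := ncomp_erase_add_card_le (G := G) (S := S) (i := s) (A := {x, y, w})
    (insert_nonempty x _) (by simp [hx, hy, hS.notMem]) (by simp [hsx, hsy, hsw])
    (by simp [Set.pairwise_insert, hxy, hxw, hyw, hxy.symm, hxw.symm, hyw.symm])
  rw [card_eq_three.2 ⟨x, y, w, hxy.ne, hxw.ne, hyw.ne, rfl⟩, hG.2 _ hS.to_cutSet, hG.2 _ herase,
    card_erase_of_mem hs] at hcard
  have := card_pos.2 ⟨s, hs⟩
  omega

/-- Returning `s` merges the component of `d`, the component of `w` and leaves at `s`. For every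
other vertex of `S`, one of its two witnesses lies in none of these. -/
theorem cutSet_erase [Finite V] (hS : IsCutSetAwayFrom G w S) (hs : s ∈ S)
    (hadj : ∀ v ∉ S, G.Adj s v → v = d ∨ v = w ∨ ∀ u, G.Adj v u → u = s) :
    cutSet G (S.erase s) := by
  have hsep : ∀ {P : Set V} {t x y : V}, IsClosedOutside G S P → x ∈ P → y ∉ P → d ∉ P →
      t ≠ s → G.Adj t x → x ∉ S → Separates G S x w → Separates G (S.erase s) x y := by
    rintro P t x y hP hxP hyP hdP hts htx hxS ⟨Q, hQ, hxQ, hwQ⟩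
    refine IsClosedOutside.separates_erase (P := {u ∈ P ∩ Q | ∃ v, G.Adj u v ∧ v ≠ s}) ?_
      ⟨⟨hxP, hxQ⟩, t, htx.symm, hts⟩ (ne_of_mem_of_not_mem hs hxS).symm (fun h => hyP h.1.1) ?_
    · rintro u v hu hv huv ⟨⟨huP, huQ⟩, -⟩
      exact ⟨⟨hP hu hv huv huP, hQ hu hv huv huQ⟩, u, huv.symm, (ne_of_mem_of_not_mem hs hu).symm⟩
    · rintro v ⟨⟨hvP, hvQ⟩, u, hvu, hus⟩ hvS hsv
      rcases hadj v hvS hsv with rfl | rfl | hleaf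
      · exact hdP hvP
      · exact hwQ hvQ
      · exact hus (hleaf u hvu)
  refine cutSet_iff_forall_exists_separates.2 fun t ht => ?_
  obtain ⟨hts, htS⟩ := mem_erase.1 ht
  obtain ⟨x, y, hx, hy, htx, hty, ⟨P, hP, hxP, hyP⟩, hxw, hyw⟩ := hS.exists_separates t htS
  refine ⟨x, y, fun h => hx (mem_of_mem_erase h), fun h => hy (mem_of_mem_erase h), htx, hty, ?_⟩
  by_cases hdP : d ∈ P
  · exact (hsep hP.compl hyP (not_not.2 hxP) (not_not.2 hdP) hts hty hy hyw).symm
  · exact hsep hP hxP hyP hdP hts htx hx hxw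

end IsCutSetAwayFrom

theorem IsClosedOutside.separates_of_induce_ne {S : Finset {x : V // x ≠ w}}
    {P : Set {x : V // x ≠ w}} (hP : IsClosedOutside (G.induce {x | x ≠ w}) S P)
    (hleaf : ∀ u ∉ S.image Subtype.val, G.Adj w u → ∀ v, G.Adj u v → v = w)
    {x : {x : V // x ≠ w}} (hx : x ∈ P) (hwx : ¬ G.Adj w x) (hy : ∀ h, ⟨y, h⟩ ∉ P) :
    Separates G (S.image Subtype.val) x y := by
  refine ⟨{u | ¬ G.Adj w u ∧ ∃ hu : u ≠ w, ⟨u, hu⟩ ∈ P}, ?_, ⟨hwx, x.2, hx⟩,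
    fun ⟨_, h, hyP⟩ => hy h hyP⟩
  rintro u v hu hv huv ⟨hwu, huw, huP⟩
  have hvw : v ≠ w := by
    rintro rfl
    exact hwu huv.symm
  refine ⟨fun hwv => huw (hleaf v hv hwv u huv.symm), hvw, ?_⟩
  exact hP (u := ⟨u, huw⟩) (v := ⟨v, hvw⟩) (fun h => hu (mem_image_of_mem _ h))
    (fun h => hv (mem_image_of_mem _ h)) huv huP

theorem IsCutSetAwayFrom.of_cutSet_induce_ne [Finite V] {S : Finset {x : V // x ≠ w}}
    (hS : cutSet (G.induce {x | x ≠ w}) S)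
    (hleaf : ∀ u ∉ S.image Subtype.val, G.Adj w u → ∀ v, G.Adj u v → v = w) :
    IsCutSetAwayFrom G w (S.image Subtype.val) := by
  have himage : ∀ x : {x : V // x ≠ w}, x.1 ∈ S.image Subtype.val ↔ x ∈ S :=
    fun _ => Subtype.val_injective.mem_finset_image
  refine ⟨by simp, fun s hs => ?_⟩
  obtain ⟨s, hsS, rfl⟩ := mem_image.1 hs
  obtain ⟨x, y, hx, hy, hsx, hsy, P, hP, hxP, hyP⟩ :=
    cutSet_iff_forall_exists_separates.1 hS s hsS
  rw [← himage] at hx hy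
  have hwx : ¬ G.Adj w x := fun h => s.2 (hleaf x hx h s (Adj.symm hsx))
  have hwy : ¬ G.Adj w y := fun h => s.2 (hleaf y hy h s (Adj.symm hsy))
  exact ⟨x, y, hx, hy, hsx, hsy, hP.separates_of_induce_ne hleaf hxP hwx fun _ => hyP,
    hP.separates_of_induce_ne hleaf hxP hwx fun h => absurd rfl h,
    hP.compl.separates_of_induce_ne hleaf hyP hwy fun h => absurd rfl h⟩

end CutSets

section Whiskers

variable {k : ℕ} {B : SimpleGraph V} {f : Fin k → V} {a b u v w : V} {i j : Fin k}

@[simp]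
theorem whisker_adj_inl_inl : (whisker B f).Adj (Sum.inl a) (Sum.inl b) ↔ B.Adj a b := by
  simp only [whisker, fromRel_adj, ne_eq, Sum.inl.injEq, B.adj_comm b a, or_self,
    and_iff_right_iff_imp]
  exact Adj.ne

@[simp]
theorem whisker_adj_inl_inr : (whisker B f).Adj (Sum.inl a) (Sum.inr i) ↔ a = f i := by
  simp [whisker]

theorem whisker_adj_inr {x : V ⊕ Fin k} :
    (whisker B f).Adj (Sum.inr i) x ↔ x = Sum.inl (f i) := by
  rcases x with a | j <;> simp [whisker]

theorem exists_inl_of_whisker_adj (ha : a ∉ Set.range f) {x : V ⊕ Fin k}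
    (hax : (whisker B f).Adj (Sum.inl a) x) : ∃ u, x = Sum.inl u ∧ B.Adj a u := by
  rcases x with u | i
  · exact ⟨u, rfl, whisker_adj_inl_inl.1 hax⟩
  · exact absurd ⟨i, (whisker_adj_inl_inr.1 hax).symm⟩ ha

theorem separates_map_inl_of_forall_adj_mem {N : Finset V} (hN : ∀ u, B.Adj v u → u ∈ N)
    (hne : v ≠ w) : Separates (whisker B f) (N.map .inl) (Sum.inl v) (Sum.inl w) := by
  refine ⟨{x | x = Sum.inl v ∨ ∃ i, f i = v ∧ x = Sum.inr i}, ?_, Or.inl rfl,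
    by simpa using hne.symm⟩
  rintro x y - hy hxy (rfl | ⟨i, rfl, rfl⟩)
  · rcases y with y | i
    · exact absurd (mem_map_of_mem _ (hN y (whisker_adj_inl_inl.1 hxy))) hy
    · exact Or.inr ⟨i, (whisker_adj_inl_inr.1 hxy).symm, rfl⟩
  · exact Or.inl (whisker_adj_inr.1 hxy)

theorem IsCutSetAwayFrom.inr_notMem {S : Finset (V ⊕ Fin k)}
    (hS : IsCutSetAwayFrom (whisker B f) (Sum.inl (f j)) S) : Sum.inr j ∉ S := by
  intro hj
  obtain ⟨x, -, -, -, hjx, -, -, hxw, -⟩ := hS.exists_separates _ hj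
  exact hxw.ne (whisker_adj_inr.1 hjx)

variable [DecidableEq V]

theorem isBlock.mem_range_of_cutSet_singleton [Finite V] (hB : isBlock B)
    (h : cutSet (whisker B f) {Sum.inl b}) : b ∈ Set.range f := by
  by_contra hb
  obtain ⟨x, y, hx, hy, hbx, hby, P, hP, hxP, hyP⟩ :=
    cutSet_iff_forall_exists_separates.1 h _ (mem_singleton_self _)
  obtain ⟨x, rfl, hBx⟩ := exists_inl_of_whisker_adj hb hbx
  obtain ⟨y, rfl, hBy⟩ := exists_inl_of_whisker_adj hb hby
  refine hB.2 b (cutSet_iff_forall_exists_separates.2 fun i hi => ?_)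
  obtain rfl := mem_singleton.1 hi
  refine ⟨x, y, by simpa using hx, by simpa using hy, hBx, hBy, Sum.inl ⁻¹' P, ?_, hxP, hyP⟩
  exact fun u v hu hv huv huP => hP (by simpa using hu) (by simpa using hv)
    (whisker_adj_inl_inl.2 huv) huP

theorem inl_mem_of_isUniversal_of_cutSet [Finite V] {T : Finset (V ⊕ Fin k)}
    (hT : cutSet (whisker B f) T) (ha : a ∉ Set.range f) (haT : Sum.inl a ∈ T)
    (hu : B.IsUniversal u) : Sum.inl u ∈ T := by
  by_contra huT
  obtain ⟨x, y, hx, hy, hax, hay, hxy⟩ := cutSet_iff_forall_exists_separates.1 hT _ haT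
  obtain ⟨x, rfl, -⟩ := exists_inl_of_whisker_adj ha hax
  obtain ⟨y, rfl, -⟩ := exists_inl_of_whisker_adj ha hay
  have huy : Separates (whisker B f) T (Sum.inl u) (Sum.inl y) := by
    rcases eq_or_ne u x with rfl | hux
    · exact hxy
    · exact hxy.of_adj hx huT (whisker_adj_inl_inl.2 (hu hux).symm)
  rcases eq_or_ne u y with rfl | huy_ne
  · exact huy.ne rfl
  · exact (huy.of_adj huT hy (whisker_adj_inl_inl.2 (hu huy_ne))).ne rfl

theorem accessible.eq_of_isUniversal [Finite V] (hG : accessible (whisker B f))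
    {S : Finset (V ⊕ Fin k)} (hS : cutSet (whisker B f) S) (haS : Sum.inl a ∈ S)
    (ha : a ∉ Set.range f) (hb : b ∉ Set.range f) (hua : B.IsUniversal a)
    (hub : B.IsUniversal b) : a = b := by
  obtain ⟨T, -, hT, c, hc⟩ := hG.exists_cutSet_inter_eq_singleton hS
    (A := Sum.inl '' (Set.range f)ᶜ) ⟨_, haS, a, ha, rfl⟩
  obtain ⟨hcT, c, hcf, rfl⟩ := hc.symm.subset rfl
  have heq : ∀ u, u ∉ Set.range f → B.IsUniversal u → u = c := fun u huf hu =>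
    Sum.inl_injective (hc.subset ⟨inl_mem_of_isUniversal_of_cutSet hT hcf hcT hu, u, huf, rfl⟩)
  rw [heq a ha hua, heq b hb hub]

theorem exists_adj_of_not_isUniversal [Finite V] (hB : isBlock B) (hG : accessible (whisker B f))
    (hv : ¬ B.IsUniversal v) : ∃ j, B.Adj v (f j) := by
  classical
  have := Fintype.ofFinite V
  obtain ⟨w, hvw, hnadj⟩ : ∃ w, v ≠ w ∧ ¬ B.Adj v w := by simpa [IsUniversal] using hv
  have hsepN : Separates (whisker B f) ((B.neighborFinset v).map .inl) (Sum.inl v) (Sum.inl w) :=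
    separates_map_inl_of_forall_adj_mem (by simp) hvw
  obtain ⟨S, hSN, hS, hsep⟩ := hsepN.exists_cutSet_subset (by simp) (by simpa using hnadj)
  have hne : S.Nonempty := by
    rw [nonempty_iff_ne_empty]
    rintro rfl
    exact not_separates_empty hG.1.1.preconnected hsep
  obtain ⟨s, hs, hcut⟩ := hG.exists_cutSet_singleton hS hne
  obtain ⟨b, hb, rfl⟩ := mem_map.1 (hSN hs)
  obtain ⟨j, rfl⟩ := hB.mem_range_of_cutSet_singleton hcut
  exact ⟨j, (B.mem_neighborFinset v _).1 hb⟩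

theorem exists_isCutSetAwayFrom [Finite V]
    (h : ∃ S : Finset {x : V ⊕ Fin k // x ≠ Sum.inl (f j)},
      cutSet ((whisker B f).induce {x | x ≠ Sum.inl (f j)}) S ∧
      ∀ u, B.Adj (f j) u → Sum.inl u ∈ S.image Subtype.val) :
    ∃ S, IsCutSetAwayFrom (whisker B f) (Sum.inl (f j)) S ∧
      ∀ u, B.Adj (f j) u → Sum.inl u ∈ S := by
  obtain ⟨S, hS, hN⟩ := h
  refine ⟨S.image Subtype.val, .of_cutSet_induce_ne hS ?_, hN⟩
  rintro (u | i) huS hju v huv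
  · exact absurd (hN u (whisker_adj_inl_inl.1 hju)) huS
  · rw [whisker_adj_inr.1 huv, whisker_adj_inl_inr.1 hju]

namespace IsCutSetAwayFrom

variable [Fintype V] [DecidableRel B.Adj] {S : Finset (V ⊕ Fin k)}

theorem three_le_degree (hS : IsCutSetAwayFrom (whisker B f) (Sum.inl (f j)) S)
    (hG : unmixed (whisker B f)) (hwS : Sum.inl w ∈ S) (hw : B.Adj w (f j)) :
    3 ≤ B.degree w := by
  by_contra! hdeg
  have hcard : #((B.neighborFinset w).erase (f j)) ≤ 1 := by
    rw [card_erase_of_mem ((B.mem_neighborFinset _ _).2 hw), card_neighborFinset_eq_degree]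
    omega
  have : Nonempty V := ⟨w⟩
  obtain ⟨d, hd⟩ := card_le_one_iff_subset_singleton.1 hcard
  refine hS.not_cutSet_erase hG hwS (whisker_adj_inl_inl.2 hw)
    (hS.cutSet_erase (d := Sum.inl d) hwS ?_)
  rintro (u | i) - hwu
  · rcases eq_or_ne u (f j) with rfl | hu
    · exact Or.inr (Or.inl rfl)
    · have hud : u ∈ ({d} : Finset V) :=
        hd (mem_erase.2 ⟨hu, (B.mem_neighborFinset _ _).2 (whisker_adj_inl_inl.1 hwu)⟩)
      exact Or.inl (congrArg Sum.inl (mem_singleton.1 hud))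
  · refine Or.inr (Or.inr fun v hv => ?_)
    rw [whisker_adj_inr.1 hv, whisker_adj_inl_inr.1 hwu]

theorem degree_lt_card (hS : IsCutSetAwayFrom (whisker B f) (Sum.inl (f j)) S)
    (hG : accessible (whisker B f)) (hne : S.Nonempty)
    (hN : ∀ u, B.Adj (f j) u → Sum.inl u ∈ S) : B.degree (f j) < #S := by
  have hsub : (B.neighborFinset (f j)).map .inl ⊆ S := by
    intro x hx
    obtain ⟨u, hu, rfl⟩ := mem_map.1 hx
    exact hN u ((B.mem_neighborFinset _ _).1 hu)
  rw [← card_neighborFinset_eq_degree, ← card_map .inl]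
  refine card_lt_card (hsub.ssubset_of_ne fun heq => ?_)
  obtain ⟨s, hs, herase⟩ := hG.2 S hS.to_cutSet hne.ne_empty
  obtain ⟨u, hu, rfl⟩ := mem_map.1 (heq ▸ hs)
  exact hS.not_cutSet_erase hG.1 hs
    (whisker_adj_inl_inl.2 ((B.mem_neighborFinset _ _).1 hu).symm) herase

theorem degree_le (hS : IsCutSetAwayFrom (whisker B f) (Sum.inl (f j)) S)
    (hG : accessible (whisker B f)) (hN : ∀ u, B.Adj (f j) u → Sum.inl u ∈ S) :
    B.degree (f j) ≤ (Fintype.card V + k) / 2 - 2 := by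
  rcases S.eq_empty_or_nonempty with rfl | hne
  · have hzero : B.degree (f j) = 0 :=
      (degree_eq_zero B (f j)).2 fun u hu => notMem_empty _ (hN u hu)
    omega
  have hlt := hS.degree_lt_card hG hne hN
  have hleaf : (whisker B f).Adj (Sum.inl (f j)) (Sum.inr j) := whisker_adj_inl_inr.2 rfl
  have hcount := ncomp_add_card_lt_of_adj hS.notMem hS.inr_notMem hleaf
  rw [hG.1.2 S hS.to_cutSet, Fintype.card_sum, Fintype.card_fin] at hcount
  omega

end IsCutSetAwayFrom

theorem three_le_degree_of_forall_adj [Fintype V] [Nontrivial V] [DecidableRel B.Adj]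
    (hB : isBlock B) (hG : accessible (whisker B f)) (j : Fin k)
    (h : ∀ i w, B.Adj w (f i) → 3 ≤ B.degree w) (v : V) : 3 ≤ B.degree v := by
  by_cases hv : B.IsUniversal v
  · obtain ⟨w, hw⟩ := hB.1.preconnected.exists_adj_of_nontrivial (f j)
    have hdeg := h j w hw.symm
    have hlt := B.degree_lt_card_verts w
    have := (B.degree_eq_card_sub_one v).2 hv
    omega
  · obtain ⟨i, hi⟩ := exists_adj_of_not_isUniversal hB hG hv
    exact h i v hi

end Whiskers

section EdgeCount

variable [Fintype V] {B : SimpleGraph V} [DecidableRel B.Adj]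

theorem mul_card_le_two_mul_card_edgeFinset {m : ℕ} (h : ∀ v, m ≤ B.degree v) :
    m * Fintype.card V ≤ 2 * #B.edgeFinset := by
  rw [← sum_degrees_eq_twice_card_edges, mul_comm, ← smul_eq_mul, ← card_univ]
  exact card_nsmul_le_sum _ _ _ fun v _ => h v

theorem two_mul_card_edgeFinset_le {W : Finset V} {m : ℕ} (hW : ∀ v ∈ W, B.degree v ≤ m)
    (huniq : ∀ a ∉ W, ∀ b ∉ W, B.IsUniversal a → B.IsUniversal b → a = b) :
    2 * #B.edgeFinset ≤
      #W * m + (Fintype.card V - 1) + (Fintype.card V - 2) * (Fintype.card V - #W - 1) := by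
  classical
  have hcompl : ∑ v ∈ Wᶜ, B.degree v ≤
      (Fintype.card V - 1) + (Fintype.card V - 1 - 1) * (#Wᶜ - 1) :=
    sum_le_add_mul_of_unique_max (fun v _ => Nat.le_sub_one_of_lt (B.degree_lt_card_verts v))
      (by simpa using huniq)
  rw [card_compl] at hcompl
  rw [← sum_degrees_eq_twice_card_edges, ← sum_add_sum_compl W, add_assoc]
  exact add_le_add (sum_le_card_nsmul W _ m hW) hcompl

end EdgeCount

theorem bounds_num_edges_block_general [Fintype V] [Nontrivial V] [DecidableEq V] {k : ℕ}
    (B : SimpleGraph V) [DecidableRel B.Adj] (hB : isBlock B)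
    (f : Fin k → V) (hf : Function.Injective f)
    (hk : 0 < k)
    (hacc : accessible (whisker B f))
    (hyp : ∀ j : Fin k, ∃ S : Finset {x : V ⊕ Fin k // x ≠ Sum.inl (f j)},
      cutSet ((whisker B f).induce {x | x ≠ Sum.inl (f j)}) S ∧
      ∀ u, B.Adj (f j) u → Sum.inl u ∈ S.image Subtype.val) :
    (∀ v : V, 3 ≤ B.degree v) ∧
    (∀ i : Fin k, B.degree (f i) ≤ (Fintype.card V + k) / 2 - 2) ∧
    (∀ a b : V, a ∉ Set.range f → b ∉ Set.range f →
      B.degree a = Fintype.card V - 1 → B.degree b = Fintype.card V - 1 → a = b) ∧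
    3 * Fintype.card V ≤ 2 * B.edgeFinset.card ∧
    2 * B.edgeFinset.card ≤
      k * ((Fintype.card V + k) / 2 - 2) + (Fintype.card V - 1) +
        (Fintype.card V - 2) * (Fintype.card V - k - 1) := by
  choose S hS hN using fun j => exists_isCutSetAwayFrom (hyp j)
  have hmin : ∀ v, 3 ≤ B.degree v :=
    three_le_degree_of_forall_adj hB hacc ⟨0, hk⟩ fun i w hw =>
      (hS i).three_le_degree hacc.1 (hN i w hw.symm) hw
  have hcut : ∀ i, B.degree (f i) ≤ (Fintype.card V + k) / 2 - 2 := fun i =>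
    (hS i).degree_le hacc (hN i)
  have huniq : ∀ a b : V, a ∉ Set.range f → b ∉ Set.range f →
      B.IsUniversal a → B.IsUniversal b → a = b := fun a b ha hb hua hub =>
    hacc.eq_of_isUniversal (hS ⟨0, hk⟩).to_cutSet
      (hN _ a (hua fun h => ha ⟨_, h.symm⟩).symm) ha hb hua hub
  refine ⟨hmin, hcut, by simpa using huniq, mul_card_le_two_mul_card_edgeFinset hmin, ?_⟩
  have hcard : #(univ.image f) = k := by rw [card_image_of_injective _ hf, card_fin]
  have hedges := two_mul_card_edgeFinset_le (B := B) (W := univ.image f)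
    (m := (Fintype.card V + k) / 2 - 2) (by simpa using hcut)
    (fun a ha b hb => huniq a b (by simpa using ha) (by simpa using hb))
  rwa [hcard] at hedges

theorem bounds_num_edges_block [Fintype V] [DecidableEq V] {k : ℕ}
    (B : SimpleGraph V) [DecidableRel B.Adj] (hB : isBlock B)
    (f : Fin k → V) (hf : Function.Injective f)
    (hk : 4 ≤ k) (hkn : k ≤ Fintype.card V)
    (hacc : accessible (whisker B f))
    (hyp : ∀ j : Fin k, ∃ S : Finset {x : V ⊕ Fin k // x ≠ Sum.inl (f j)},
      cutSet ((whisker B f).induce {x | x ≠ Sum.inl (f j)}) S ∧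
      ∀ u, B.Adj (f j) u → Sum.inl u ∈ S.image Subtype.val) :
    (∀ v : V, 3 ≤ B.degree v) ∧
    (∀ i : Fin k, B.degree (f i) ≤ (Fintype.card V + k) / 2 - 2) ∧
    (∀ a b : V, a ∉ Set.range f → b ∉ Set.range f →
      B.degree a = Fintype.card V - 1 → B.degree b = Fintype.card V - 1 → a = b) ∧
    3 * Fintype.card V ≤ 2 * B.edgeFinset.card ∧
    2 * B.edgeFinset.card ≤
      k * ((Fintype.card V + k) / 2 - 2) + (Fintype.card V - 1) +
        (Fintype.card V - 2) * (Fintype.card V - k - 1) := by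
  have : Nontrivial V := Fintype.one_lt_card_iff_nontrivial.1 (by omega)
  exact bounds_num_edges_block_general B hB f hf (by omega) hacc hyp
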